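/- Let F be a γ-coherent germ with local homogeneity bounds (β_K), witnessed by a test function φ with ∫φ ≠ 0. Then homogeneity holds uniformly over all normalized test functions: for every compact K and every integer r > max{−α_{K̄_2}, −β_{K̄_2}}, one has |F_x(ψ_x^ε)| ≲ ε^{β'} with β' := β_{K̄_2}, uniformly for x ∈ K, ε ∈ (0,1], and ψ ∈ B_r. -/

import Mathlib

open MeasureTheory Metric Set Filter

noncomputable section

abbrev Ed (d : ℕ) := EuclideanSpace ℝ (Fin d)

/-- Test functions: smooth compactly supported functions on ℝ^d. -/
def IsTestFunction {d : ℕ} (φ : Ed d → ℝ) : Prop :=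
  ContDiff ℝ (⊤ : ℕ∞) φ ∧ HasCompactSupport φ

/-- The scaled test function `φ_x^λ(z) = λ^{-d} φ(λ⁻¹(z - x))`. -/
def scaled {d : ℕ} (φ : Ed d → ℝ) (x : Ed d) (l : ℝ) : Ed d → ℝ :=
  fun z => (l ^ d)⁻¹ * φ (l⁻¹ • (z - x))

/-- The `C^r` norm: sup of the norms of the iterated derivatives of order ≤ r. -/
def Cnorm {d : ℕ} (r : ℕ) (φ : Ed d → ℝ) : ℝ :=
  ⨆ i : Fin (r + 1), ⨆ x : Ed d, ‖iteratedFDeriv ℝ (i : ℕ) φ x‖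

/-- The family `B_r` of test functions supported in `B(0,1)` with `C^r` norm at most 1. -/
def Br {d : ℕ} (r : ℕ) (ψ : Ed d → ℝ) : Prop :=
  IsTestFunction ψ ∧ tsupport ψ ⊆ closedBall (0 : Ed d) 1 ∧ Cnorm r ψ ≤ 1

/-- A linear functional is a distribution if on every compact set it is bounded
by some `C^r` norm. -/
def IsDistribution {d : ℕ} (T : (Ed d → ℝ) →ₗ[ℝ] ℝ) : Prop :=
  ∀ K : Set (Ed d), IsCompact K → ∃ r : ℕ, ∃ C : ℝ,
    ∀ φ : Ed d → ℝ, IsTestFunction φ → tsupport φ ⊆ K → |T φ| ≤ C * Cnorm r φ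

/-- A germ: a measurable family of distributions. -/
def IsGerm {d : ℕ} (F : Ed d → ((Ed d → ℝ) →ₗ[ℝ] ℝ)) : Prop :=
  (∀ x, IsDistribution (F x)) ∧
  ∀ ψ : Ed d → ℝ, IsTestFunction ψ → Measurable fun x => F x ψ

/-- Monomial `y^k` for a multi-index `k`. -/
def mono {d : ℕ} (k : Fin d → ℕ) (y : Ed d) : ℝ := ∏ i, (y i) ^ (k i)

/-- Convolution of two functions. -/
def conv {d : ℕ} (f g : Ed d → ℝ) : Ed d → ℝ := fun x => ∫ y, f (x - y) * g y

/-- `rIndex α` is the smallest integer `r > -α` (for `α ≤ 0`). -/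
def rIndex (α : ℝ) : ℕ := Nat.floor (-α) + 1

/-- Negative Hölder space condition `T ∈ C^α` for `α ≤ 0`. -/
def HolderNeg {d : ℕ} (α : ℝ) (T : (Ed d → ℝ) →ₗ[ℝ] ℝ) : Prop :=
  ∀ K : Set (Ed d), IsCompact K → ∃ C : ℝ, ∀ x ∈ K, ∀ ε ∈ Set.Ioc (0:ℝ) 1,
    ∀ ψ : Ed d → ℝ, Br (rIndex α) ψ → |T (scaled ψ x ε)| ≤ C * ε ^ α

/-- `(α,γ)`-coherence of a germ with respect to the test function φ. -/
def AlphaGammaCoherent {d : ℕ} (α γ : ℝ) (F : Ed d → ((Ed d → ℝ) →ₗ[ℝ] ℝ))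
    (φ : Ed d → ℝ) : Prop :=
  ∀ K : Set (Ed d), IsCompact K → ∃ C : ℝ, ∀ y ∈ K, ∀ z ∈ K, ∀ ε ∈ Set.Ioc (0:ℝ) 1,
    |F z (scaled φ y ε) - F y (scaled φ y ε)| ≤ C * ε ^ α * (‖z - y‖ + ε) ^ (γ - α)

/-- Global homogeneity bound β for a germ with respect to the test function φ. -/
def HomBound {d : ℕ} (β : ℝ) (F : Ed d → ((Ed d → ℝ) →ₗ[ℝ] ℝ)) (φ : Ed d → ℝ) : Prop :=
  ∀ K : Set (Ed d), IsCompact K → ∃ C : ℝ, ∀ x ∈ K, ∀ ε ∈ Set.Ioc (0:ℝ) 1,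
    |F x (scaled φ x ε)| ≤ C * ε ^ β
/-- γ-coherence of a germ with respect to a test function φ and a family of
exponents `αf K ≤ min{0,γ}` indexed by compact sets. -/
def GammaCoherentFam {d : ℕ} (γ : ℝ) (F : Ed d → ((Ed d → ℝ) →ₗ[ℝ] ℝ))
    (φ : Ed d → ℝ) (αf : Set (Ed d) → ℝ) : Prop :=
  ∀ K : Set (Ed d), IsCompact K → αf K ≤ min 0 γ ∧ ∃ C : ℝ,
    ∀ y ∈ K, ∀ z ∈ K, ∀ ε ∈ Set.Ioc (0:ℝ) 1,
      |F z (scaled φ y ε) - F y (scaled φ y ε)| ≤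
        C * ε ^ (αf K) * (‖z - y‖ + ε) ^ (γ - αf K)

/-! The kernel `φ` is first tweaked: a combination `k = ∑ cᵢ φ^{λᵢ}` with Lagrange weights `cᵢ` has
the moments of the Dirac mass at the origin up to order `r`. Then `ρ = k² ⋆ k` is a mollifier whose
dyadic increments factor, following Caravenna and Zambotti, as
`ρ^{δ/2} - ρ^δ = (k^{δ/2} - k^{2δ}) ⋆ k^δ`. For a distribution `T`, the telescoping sum of
`T (ρ^{δ/2} ⋆ ψ) - T (ρ^δ ⋆ ψ)` over `δ = 2^{-n}` reaches `T ψ`. The difference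
`k^{δ/2} - k^{2δ}` annihilates polynomials of degree less than `r`, so its convolution with `ψ` is
of size `δ^r`, while pairing `T` with a translate of `k^δ` costs `δ^{-s}`: the sum is geometric as
soon as `s < r`. This is applied to `F_x` rescaled by `ε` around `x`; coherence replaces `F_x` by
`F_y` when it is tested against a kernel centred at `y`, where homogeneity bounds it with
`s = max(-α, -β)`. -/

open scoped Convolution Pointwise ContDiff

section Calculus

variable {E F : Type*} [NormedAddCommGroup E] [NormedSpace ℝ E] [NormedAddCommGroup F]
  [NormedSpace ℝ F]

lemma exists_clm_comp_eq {V : Type*} [AddCommGroup V] [Module ℝ V] (j : V →ₗ[ℝ] E)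
    (T : V →ₗ[ℝ] ℝ) (C : ℝ) (hT : ∀ v, |T v| ≤ C * ‖j v‖) :
    ∃ L : E →L[ℝ] ℝ, ∀ v, L (j v) = T v := by
  have hker : j.ker ≤ T.ker := fun v hv => by
    simpa [LinearMap.mem_ker.1 hv] using hT v
  let T' : j.range →ₗ[ℝ] ℝ := j.ker.liftQ T hker ∘ₗ j.quotKerEquivRange.symm
  have hT' (v : V) : T' ⟨j v, v, rfl⟩ = T v := by
    rw [LinearMap.comp_apply, LinearEquiv.coe_coe, j.quotKerEquivRange_symm_apply_image v ⟨v, rfl⟩,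
      Submodule.mkQ_apply, Submodule.liftQ_apply]
  obtain ⟨L, hL, -⟩ := exists_extension_norm_eq j.range <| T'.mkContinuous C <| by
    rintro ⟨_, v, rfl⟩
    simpa [hT'] using hT v
  exact ⟨L, fun v => (hL ⟨j v, v, rfl⟩).trans (hT' v)⟩

lemma norm_sub_sum_iteratedFDeriv_le [CompleteSpace F] {f : E → F} {r : ℕ}
    (hf : ContDiff ℝ r f) {C : ℝ} (hC : ∀ x, ‖iteratedFDeriv ℝ r f x‖ ≤ C) (x h : E) :
    ‖f (x + h) - ∑ j ∈ Finset.range r, (j.factorial : ℝ)⁻¹ • iteratedFDeriv ℝ j f x fun _ => h‖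
      ≤ C * ‖h‖ ^ r := by
  have : 0 ≤ C := (norm_nonneg _).trans (hC x)
  cases r with
  | zero => simpa using hC (x + h)
  | succ n =>
    rw [map_add_eq_sum_add_integral_iteratedFDeriv fun t _ => hf.contDiffAt,
      add_sub_cancel_left, norm_smul]
    have hfact : ‖(n.factorial : ℝ)⁻¹‖ ≤ 1 := by
      rw [Real.norm_of_nonneg (by positivity)]
      exact inv_le_one_of_one_le₀ (by exact_mod_cast n.factorial_pos)
    have hintegral : ‖∫ t in (0 : ℝ)..1,
        (1 - t) ^ n • iteratedFDeriv ℝ (n + 1) f (x + t • h) fun _ => h‖ ≤ C * ‖h‖ ^ (n + 1) := by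
      refine (intervalIntegral.norm_integral_le_of_norm_le_const fun t ht => ?_).trans_eq
        (by rw [sub_zero, abs_one, mul_one])
      rw [uIoc_of_le zero_le_one] at ht
      have hweight : ‖(1 - t) ^ n‖ ≤ 1 := by
        rw [norm_pow, Real.norm_of_nonneg (by linarith [ht.2])]
        exact pow_le_one₀ (by linarith [ht.2]) (by linarith [ht.1])
      have hderiv : ‖iteratedFDeriv ℝ (n + 1) f (x + t • h) fun _ => h‖ ≤ C * ‖h‖ ^ (n + 1) :=
        ((iteratedFDeriv ℝ (n + 1) f _).le_opNorm_mul_pow_of_le (pi_norm_const_le h)).trans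
          (by gcongr; exact hC _)
      rw [norm_smul]
      exact (mul_le_of_le_one_left (norm_nonneg _) hweight).trans hderiv
    exact (mul_le_of_le_one_left (norm_nonneg _) hfact).trans hintegral

end Calculus

section Convolution

variable {G E F : Type*} [NormedAddCommGroup G] [MeasurableSpace G] [NormedAddCommGroup E]
  [NormedSpace ℝ E] [NormedAddCommGroup F] [NormedSpace ℝ F] {μ : Measure G} {h : G → ℝ}

lemma map_convolution_lsmul (e : E ≃ₗᵢ[ℝ] F) (f : G → E) (x : G) :
    e ((h ⋆[.lsmul ℝ ℝ, μ] f) x) = (h ⋆[.lsmul ℝ ℝ, μ] (e ∘ f)) x := by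
  simpa [convolution_def] using
    (e.toContinuousLinearEquiv.integral_comp_comm (fun t => h t • f (x - t)) (μ := μ)).symm

lemma iteratedFDeriv_convolution_right [NormedSpace ℝ G] [BorelSpace G]
    [SFinite μ] [μ.IsAddLeftInvariant] (hh : LocallyIntegrable h μ)
    {f : G → E} {n : ℕ} (hf : ContDiff ℝ n f) (hfc : HasCompactSupport f) :
    iteratedFDeriv ℝ n (h ⋆[.lsmul ℝ ℝ, μ] f) = h ⋆[.lsmul ℝ ℝ, μ] iteratedFDeriv ℝ n f := by
  induction n with
  | zero =>
    rw [iteratedFDeriv_zero_eq_comp, iteratedFDeriv_zero_eq_comp]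
    exact funext fun x => map_convolution_lsmul _ f x
  | succ n ih =>
    ext1 x
    have hn : (n : WithTop ℕ∞) + 1 ≤ (n + 1 : ℕ) := by norm_cast
    have hderiv := (hfc.iteratedFDeriv n).hasFDerivAt_convolution_right
      (.lsmul ℝ ℝ) hh (hf.iteratedFDeriv_right (add_comm (1 : WithTop ℕ∞) n ▸ hn)) x
    rw [iteratedFDeriv_succ_eq_comp_left, iteratedFDeriv_succ_eq_comp_left, Function.comp_apply,
      ih (hf.of_le (le_self_add.trans hn)), hderiv.fderiv]
    exact map_convolution_lsmul (E := G →L[ℝ] G [×n]→L[ℝ] E) (F := G [×(n + 1)]→L[ℝ] E)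
      (continuousMultilinearCurryLeftEquiv ℝ (fun _ : Fin (n + 1) => G) E).symm _ x

lemma norm_convolution_lsmul_le (hh : Integrable h μ) {f : G → E} {B : ℝ} (hf : ∀ x, ‖f x‖ ≤ B)
    (x : G) : ‖(h ⋆[.lsmul ℝ ℝ, μ] f) x‖ ≤ (∫ t, ‖h t‖ ∂μ) * B := by
  rw [← integral_mul_const]
  refine norm_integral_le_of_norm_le (hh.norm.mul_const B) (.of_forall fun t => ?_)
  rw [ContinuousLinearMap.lsmul_apply, norm_smul]
  gcongr
  exact hf _

lemma support_convolution_subset_closedBall {f : G → E} {a b : ℝ}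
    (hh : Function.support h ⊆ closedBall 0 a) (hf : Function.support f ⊆ closedBall 0 b) :
    Function.support (h ⋆[.lsmul ℝ ℝ, μ] f) ⊆ closedBall 0 (a + b) := by
  refine (support_convolution_subset _).trans ((add_subset_add hh hf).trans ?_)
  rintro _ ⟨x, hx, y, hy, rfl⟩
  rw [mem_closedBall_zero_iff] at *
  exact (norm_add_le x y).trans (add_le_add hx hy)

end Convolution

section TestFunctions

variable {d : ℕ} {f g h : Ed d → ℝ}

/-- The vector space of test functions on `ℝ^d`, bundled so that jets and restrictions of
distributions are linear maps on it. -/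
def testFunctions (d : ℕ) : Submodule ℝ (Ed d → ℝ) where
  carrier := {f | IsTestFunction f}
  add_mem' hf hg := ⟨hf.1.add hg.1, hf.2.add hg.2⟩
  zero_mem' := ⟨contDiff_const, .zero⟩
  smul_mem' _ _ hf := ⟨contDiff_const.smul hf.1, hf.2.smul_left⟩

namespace IsTestFunction

lemma contDiff_nat (hf : IsTestFunction f) (n : ℕ) : ContDiff ℝ n f :=
  hf.1.of_le (by exact_mod_cast le_top)

protected lemma continuous (hf : IsTestFunction f) : Continuous f := hf.1.continuous

lemma integrable_mul (hf : IsTestFunction f) (hg : Continuous g) : Integrable fun u => f u * g u :=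
  (hf.continuous.mul hg).integrable_of_hasCompactSupport hf.2.mul_right

protected lemma integrable (hf : IsTestFunction f) : Integrable f :=
  hf.continuous.integrable_of_hasCompactSupport hf.2

lemma continuous_iteratedFDeriv (hf : IsTestFunction f) (n : ℕ) :
    Continuous (iteratedFDeriv ℝ n f) :=
  (hf.contDiff_nat n).continuous_iteratedFDeriv le_rfl

lemma exists_norm_iteratedFDeriv_le (hf : IsTestFunction f) (n : ℕ) :
    ∃ C, ∀ x, ‖iteratedFDeriv ℝ n f x‖ ≤ C :=
  (hf.2.iteratedFDeriv n).exists_bound_of_continuous (hf.continuous_iteratedFDeriv n)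

lemma convolution (hf : IsTestFunction f) (hh : Continuous h) (hhc : HasCompactSupport h) :
    IsTestFunction (h ⋆ f) :=
  ⟨hf.2.contDiff_convolution_right _ hh.locallyIntegrable hf.1, hhc.convolution _ hf.2⟩

/-- The translate `f(· - y)` of a test function, as an element of `testFunctions d`. -/
def translate (hf : IsTestFunction f) (y : Ed d) : testFunctions d :=
  ⟨fun z => f (z - y), hf.1.comp (contDiff_id.sub contDiff_const),
    hf.2.comp_homeomorph (Homeomorph.subRight y)⟩

lemma norm_iteratedFDeriv_le_Cnorm (hf : IsTestFunction f) {i r : ℕ} (hi : i ≤ r) (x : Ed d) :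
    ‖iteratedFDeriv ℝ i f x‖ ≤ Cnorm r f := by
  obtain ⟨C, hC⟩ := hf.exists_norm_iteratedFDeriv_le i
  exact (le_ciSup ⟨C, forall_mem_range.2 hC⟩ x).trans <|
    le_ciSup (f := fun i : Fin (r + 1) => ⨆ x : Ed d, ‖iteratedFDeriv ℝ (i : ℕ) f x‖)
      (Set.finite_range _).bddAbove ⟨i, Nat.lt_succ_of_le hi⟩

end IsTestFunction

lemma Cnorm_nonneg (r : ℕ) (f : Ed d → ℝ) : 0 ≤ Cnorm r f :=
  Real.iSup_nonneg fun _ => Real.iSup_nonneg fun _ => norm_nonneg _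

namespace Br

variable {r : ℕ} {ψ : Ed d → ℝ}

lemma norm_iteratedFDeriv_le_one (hψ : Br r ψ) {i : ℕ} (hi : i ≤ r) (x : Ed d) :
    ‖iteratedFDeriv ℝ i ψ x‖ ≤ 1 :=
  (hψ.1.norm_iteratedFDeriv_le_Cnorm hi x).trans hψ.2.2

lemma norm_le_one (hψ : Br r ψ) (x : Ed d) : ‖ψ x‖ ≤ 1 := by
  simpa using hψ.norm_iteratedFDeriv_le_one r.zero_le x

lemma support_subset (hψ : Br r ψ) : Function.support ψ ⊆ closedBall 0 1 :=
  (subset_tsupport ψ).trans hψ.2.1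

end Br

end TestFunctions

section Distributions

variable {d m : ℕ} {f h : Ed d → ℝ} {T : (Ed d → ℝ) →ₗ[ℝ] ℝ}

/-- The Banach space of families of bounded continuous candidates for the derivatives of order
`0, …, m`, in which the integrals behind `IsDistribution.map_convolution` are taken. -/
abbrev JetSpace (d m : ℕ) : Type :=
  (i : Fin (m + 1)) → BoundedContinuousFunction (Ed d) (Ed d [×(i : ℕ)]→L[ℝ] ℝ)

instance : NormedAddCommGroup (JetSpace d m) := Pi.normedAddCommGroup

instance : NormedSpace ℝ (JetSpace d m) := Pi.normedSpace

/-- The `m`-jet of a test function; its norm is the `C^m` norm. -/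
def jet (d m : ℕ) : testFunctions d →ₗ[ℝ] JetSpace d m where
  toFun f i := .ofNormedAddCommGroup (iteratedFDeriv ℝ (i : ℕ) f.1)
    (f.2.continuous_iteratedFDeriv i) (f.2.exists_norm_iteratedFDeriv_le i).choose
    (f.2.exists_norm_iteratedFDeriv_le i).choose_spec
  map_add' f g := by
    ext i x : 2
    exact iteratedFDeriv_add_apply (f.2.contDiff_nat i).contDiffAt (g.2.contDiff_nat i).contDiffAt
  map_smul' c f := by
    ext i x : 2
    exact iteratedFDeriv_const_smul_apply (f.2.contDiff_nat i).contDiffAt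

lemma jet_apply (f : testFunctions d) (i : Fin (m + 1)) (x : Ed d) :
    jet d m f i x = iteratedFDeriv ℝ (i : ℕ) f.1 x := rfl

lemma Cnorm_le_norm_jet (f : testFunctions d) : Cnorm m f.1 ≤ ‖jet d m f‖ :=
  ciSup_le fun i => ciSup_le fun x =>
    ((jet d m f i).norm_coe_le_norm x).trans (norm_le_pi_norm (jet d m f) i)

lemma jet_translate_apply (hf : IsTestFunction f) (y : Ed d) (i : Fin (m + 1)) (x : Ed d) :
    jet d m (hf.translate y) i x = iteratedFDeriv ℝ (i : ℕ) f (x - y) :=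
  iteratedFDeriv_comp_sub i y x

lemma continuous_jet_translate (hf : IsTestFunction f) :
    Continuous fun y => jet d m (hf.translate y) := by
  refine continuous_pi fun i => Metric.continuous_iff.2 fun y ε hε => ?_
  have hunif : UniformContinuous (iteratedFDeriv ℝ (i : ℕ) f) :=
    (hf.2.iteratedFDeriv i).uniformContinuous_of_continuous (hf.continuous_iteratedFDeriv i)
  obtain ⟨δ, hδ, hdist⟩ := Metric.uniformContinuous_iff.1 hunif (ε / 2) (half_pos hε)
  refine ⟨δ, hδ, fun y' hy' => lt_of_le_of_lt
    ((BoundedContinuousFunction.dist_le (half_pos hε).le).2 fun z => ?_) (half_lt_self hε)⟩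
  rw [jet_translate_apply, jet_translate_apply]
  exact (hdist (by rwa [dist_sub_left])).le

lemma integrable_smul_jet_translate (hf : IsTestFunction f) (hh : Continuous h)
    (hhc : HasCompactSupport h) : Integrable fun y => h y • jet d m (hf.translate y) :=
  (hh.smul (continuous_jet_translate (m := m) hf)).integrable_of_hasCompactSupport hhc.smul_right

lemma jet_convolution (hf : IsTestFunction f) (hh : Continuous h) (hhc : HasCompactSupport h) :
    jet d m ⟨h ⋆ f, hf.convolution hh hhc⟩ = ∫ y, h y • jet d m (hf.translate y) := by
  ext i x : 2
  let eval : JetSpace d m →L[ℝ] Ed d [×(i : ℕ)]→L[ℝ] ℝ :=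
    (BoundedContinuousFunction.evalCLM ℝ x).comp (.proj i)
  rw [jet_apply, iteratedFDeriv_convolution_right hh.locallyIntegrable (hf.contDiff_nat i) hf.2]
  refine Eq.trans ?_ (eval.integral_comp_comm (integrable_smul_jet_translate hf hh hhc))
  simp only [map_smul]
  exact integral_congr_ae <|
    .of_forall fun y => congrArg (h y • ·) (jet_translate_apply hf y i x).symm

namespace IsDistribution

-- By Hahn–Banach, `T` becomes a continuous functional of the jet, which commutes with Bochner
-- integrals.
lemma exists_clm_jet (hT : IsDistribution T) {K : Set (Ed d)} (hK : IsCompact K) :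
    ∃ m, ∃ L : JetSpace d m →L[ℝ] ℝ,
      ∀ f : testFunctions d, Function.support f.1 ⊆ K → T f.1 = L (jet d m f) := by
  obtain ⟨m, C, hC⟩ := hT K hK
  let V : Submodule ℝ (testFunctions d) :=
    (Submodule.pi Kᶜ fun _ => ⊥).comap (testFunctions d).subtype
  obtain ⟨L, hL⟩ := exists_clm_comp_eq (V := V) (jet d m ∘ₗ V.subtype)
    (T ∘ₗ (testFunctions d).subtype ∘ₗ V.subtype) |C| fun f => by
      have hsupp : tsupport f.1.1 ⊆ K :=
        closure_minimal (fun x hx => by_contra fun hxK => hx (f.2 x hxK)) hK.isClosed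
      calc |T f.1.1| ≤ C * Cnorm m f.1.1 := hC _ f.1.2 hsupp
        _ ≤ |C| * ‖jet d m f.1‖ :=
          mul_le_mul (le_abs_self C) (Cnorm_le_norm_jet f.1) (Cnorm_nonneg m _) (abs_nonneg C)
  refine ⟨m, L, fun f hf => (hL ⟨f, fun x hx => ?_⟩).symm⟩
  exact Function.notMem_support.1 fun hxf => hx (hf hxf)

lemma continuous_apply_translate (hT : IsDistribution T) (hf : IsTestFunction f) :
    Continuous fun y => T fun z => f (z - y) := by
  refine continuous_iff_continuousAt.2 fun y => ?_
  obtain ⟨m, L, hL⟩ := hT.exists_clm_jet (hf.2.isCompact.add (isCompact_closedBall y 1))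
  refine (L.continuous.comp (continuous_jet_translate hf)).continuousAt.congr ?_
  filter_upwards [closedBall_mem_nhds y one_pos] with y' hy'
  exact (hL (hf.translate y') fun z hz =>
    ⟨z - y', subset_tsupport f hz, y', hy', sub_add_cancel z y'⟩).symm

lemma map_convolution (hT : IsDistribution T) (hf : IsTestFunction f) (hh : Continuous h)
    (hhc : HasCompactSupport h) : T (h ⋆ f) = ∫ y, h y * T fun z => f (z - y) := by
  obtain ⟨m, L, hL⟩ := hT.exists_clm_jet (hf.2.isCompact.add hhc.isCompact)
  have hsupp : Function.support (h ⋆ f) ⊆ tsupport f + tsupport h :=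
    (support_convolution_subset_swap _).trans
      (add_subset_add (subset_tsupport f) (subset_tsupport h))
  rw [hL ⟨h ⋆ f, hf.convolution hh hhc⟩ hsupp, jet_convolution hf hh hhc,
    ← L.integral_comp_comm (integrable_smul_jet_translate hf hh hhc)]
  refine integral_congr_ae (.of_forall fun y => ?_)
  simp only [map_smul, smul_eq_mul]
  by_cases hy : y ∈ tsupport h
  · rw [← hL (hf.translate y) fun z hz => ⟨z - y, subset_tsupport f hz, y, hy, sub_add_cancel z y⟩]
    rfl
  · rw [image_eq_zero_of_notMem_tsupport hy, zero_mul, zero_mul]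

lemma abs_map_convolution_le (hT : IsDistribution T) (hf : IsTestFunction f) (hh : Continuous h)
    {R : ℝ} (hhR : Function.support h ⊆ closedBall 0 R) {B M : ℝ} (hB : ∀ y, ‖h y‖ ≤ B)
    (hM : ∀ y ∈ closedBall (0 : Ed d) R, |T fun z => f (z - y)| ≤ M) :
    |T (h ⋆ f)| ≤ B * M * volume.real (closedBall (0 : Ed d) R) := by
  have hhc : HasCompactSupport h := .of_support_subset_isCompact (isCompact_closedBall 0 R) hhR
  rw [hT.map_convolution hf hh hhc, ← Real.norm_eq_abs,
    ← setIntegral_eq_integral_of_forall_compl_eq_zero fun y hy => by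
      rw [Function.notMem_support.1 fun hy' => hy (hhR hy'), zero_mul]]
  refine norm_setIntegral_le_of_norm_le_const measure_closedBall_lt_top fun y hy => ?_
  rw [norm_mul]
  exact mul_le_mul (hB y) (hM y hy) (norm_nonneg _) ((norm_nonneg _).trans (hB y))

end IsDistribution

end Distributions

section ConvolutionAlgebra

lemma convolution_lsmul_comm {G : Type*} [AddCommGroup G] [MeasurableSpace G] [MeasurableAdd G]
    [MeasurableNeg G] {μ : Measure G} [μ.IsAddLeftInvariant] [μ.IsNegInvariant] (f g : G → ℝ) :
    f ⋆[.lsmul ℝ ℝ, μ] g = g ⋆[.lsmul ℝ ℝ, μ] f := by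
  ext x
  rw [convolution_lsmul_swap, convolution_lsmul]
  simp only [smul_eq_mul, mul_comm]

namespace IsTestFunction

variable {d : ℕ} {f g k : Ed d → ℝ}

lemma sub_convolution (hf : IsTestFunction f) (hg : IsTestFunction g) (hk : IsTestFunction k) :
    (f - g) ⋆ k = f ⋆ k - g ⋆ k := by
  ext x
  simp only [Pi.sub_apply, convolution_lsmul, sub_smul]
  exact integral_sub (hf.integrable_mul (hk.continuous.comp (by fun_prop)))
    (hg.integrable_mul (hk.continuous.comp (by fun_prop)))

lemma convolution_assoc (hf : IsTestFunction f) (hg : IsTestFunction g) (hk : IsTestFunction k) :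
    (f ⋆ g) ⋆ k = f ⋆ (g ⋆ k) := by
  ext x
  refine MeasureTheory.convolution_assoc _ _ _ _ mul_assoc hf.continuous.aestronglyMeasurable
    hg.continuous.aestronglyMeasurable hk.continuous.aestronglyMeasurable ?_ ?_ ?_
  · exact .of_forall <|
      hg.2.convolutionExists_right _ hf.continuous.locallyIntegrable hg.continuous
  · exact .of_forall <| hk.2.norm.convolutionExists_right _
      hg.continuous.norm.locallyIntegrable hk.continuous.norm
  · exact (hg.2.norm.convolution _ hk.2.norm).convolutionExists_right _
      hf.continuous.norm.locallyIntegrable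
      (hk.2.norm.continuous_convolution_right _ hg.continuous.norm.locallyIntegrable
        hk.continuous.norm) x

lemma convolution_right_comm (hf : IsTestFunction f) (hg : IsTestFunction g)
    (hk : IsTestFunction k) : (f ⋆ g) ⋆ k = (f ⋆ k) ⋆ g := by
  rw [hf.convolution_assoc hg hk, convolution_lsmul_comm g k, ← hf.convolution_assoc hk hg]

end IsTestFunction

end ConvolutionAlgebra

section Scaling

variable {d : ℕ}

/-- The scaling map `f ↦ f_x^l` as a linear map, so that distributions can be precomposed
with it. -/
def scaledLM (x : Ed d) (l : ℝ) : (Ed d → ℝ) →ₗ[ℝ] Ed d → ℝ where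
  toFun f := scaled f x l
  map_add' f g := by ext z; simp only [scaled, Pi.add_apply, mul_add]
  map_smul' c f := by
    ext z; simp only [scaled, Pi.smul_apply, smul_eq_mul, RingHom.id_apply, mul_left_comm]

lemma scaledLM_apply (x : Ed d) (l : ℝ) (f : Ed d → ℝ) : scaledLM x l f = scaled f x l := rfl

lemma scaled_zero_apply (f : Ed d → ℝ) (l : ℝ) (z : Ed d) :
    scaled f 0 l z = (l ^ d)⁻¹ * f (l⁻¹ • z) := by rw [scaled, sub_zero]

lemma scaled_zero_one (f : Ed d → ℝ) : scaled f 0 1 = f := by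
  ext z; simp [scaled]

lemma translate_scaled_zero (f : Ed d → ℝ) (y : Ed d) (l : ℝ) :
    (fun z => scaled f 0 l (z - y)) = scaled f y l := by
  ext z; rw [scaled_zero_apply, scaled]

lemma scaled_scaled (f : Ed d → ℝ) (x y : Ed d) (a : ℝ) {b : ℝ} (hb : b ≠ 0) :
    scaled (scaled f y a) x b = scaled f (x + b • y) (a * b) := by
  ext z
  have harg : a⁻¹ • (b⁻¹ • (z - x) - y) = (a * b)⁻¹ • (z - (x + b • y)) := by
    rw [mul_inv, mul_smul, ← sub_sub, smul_sub b⁻¹ (z - x), inv_smul_smul₀ hb]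
  simp only [scaled, harg, mul_inv, mul_pow]
  ring

lemma scaled_zero_scaled (f : Ed d → ℝ) (y : Ed d) (a : ℝ) {b : ℝ} (hb : b ≠ 0) :
    scaled (scaled f 0 a) y b = scaled f y (a * b) := by
  rw [scaled_scaled f y 0 a hb, smul_zero, add_zero]

lemma IsTestFunction.scaled {f : Ed d → ℝ} (hf : IsTestFunction f) (y : Ed d) {l : ℝ}
    (hl : l ≠ 0) : IsTestFunction (scaled f y l) :=
  ⟨contDiff_const.mul (hf.1.comp ((contDiff_id.sub contDiff_const).const_smul _)),
    ((hf.2.comp_smul (inv_ne_zero hl)).comp_homeomorph (Homeomorph.subRight y)).mul_left⟩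

lemma support_scaled_zero_subset {f : Ed d → ℝ} {R l : ℝ} (hl : 0 < l)
    (hf : Function.support f ⊆ closedBall 0 R) :
    Function.support (scaled f 0 l) ⊆ closedBall 0 (l * R) := fun u hu => by
  have hu' : l⁻¹ • u ∈ closedBall 0 R :=
    hf fun h => hu (by rw [scaled_zero_apply, h, mul_zero])
  rwa [mem_closedBall_zero_iff, norm_smul, norm_inv, Real.norm_of_nonneg hl.le,
    inv_mul_le_iff₀ hl, ← mem_closedBall_zero_iff] at hu'

lemma integral_scaled_zero_mul (f g : Ed d → ℝ) {l : ℝ} (hl : 0 < l) :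
    ∫ t, scaled f 0 l t * g t = ∫ u, f u * g (l • u) := by
  have hcov := Measure.integral_comp_smul_of_nonneg volume
    (fun t => f (l⁻¹ • t) * g t) l (hR := hl.le)
  simp only [inv_smul_smul₀ hl.ne', finrank_euclideanSpace_fin, smul_eq_mul] at hcov
  simp only [hcov, scaled_zero_apply, mul_assoc, integral_const_mul]

lemma integral_scaled_zero (f : Ed d → ℝ) {l : ℝ} (hl : 0 < l) :
    ∫ t, scaled f 0 l t = ∫ u, f u := by
  simpa using integral_scaled_zero_mul f (fun _ => 1) hl

lemma scaled_zero_convolution (f g : Ed d → ℝ) {l : ℝ} (hl : 0 < l) :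
    scaled (f ⋆ g) 0 l = scaled f 0 l ⋆ scaled g 0 l := by
  ext x
  simp only [scaled_zero_apply (f ⋆ g), convolution_lsmul, smul_eq_mul]
  rw [integral_scaled_zero_mul f (fun t => scaled g 0 l (x - t)) hl, ← integral_const_mul]
  simp only [scaled_zero_apply, smul_sub, inv_smul_smul₀ hl.ne', mul_left_comm]

variable {f : Ed d → ℝ} {l : ℝ}

lemma Cnorm_scaled_le (hf : IsTestFunction f) (x : Ed d) (hl : l ∈ Ioc (0 : ℝ) 1) (m : ℕ) :
    Cnorm m (scaled f x l) ≤ (l ^ d)⁻¹ * l⁻¹ ^ m * Cnorm m f := by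
  refine ciSup_le fun i => ciSup_le fun z => ?_
  have hl₀ := hl.1
  have hderiv : iteratedFDeriv ℝ (i : ℕ) (scaled f x l) z =
      (l ^ d)⁻¹ • l⁻¹ ^ (i : ℕ) • iteratedFDeriv ℝ (i : ℕ) f (l⁻¹ • (z - x)) := by
    have hcomp : ContDiff ℝ (i : ℕ) fun w => f (l⁻¹ • w) :=
      (hf.contDiff_nat i).comp (contDiff_id.const_smul _)
    refine (iteratedFDeriv_comp_sub (f := fun w => (l ^ d)⁻¹ • f (l⁻¹ • w)) i x z).trans ?_
    rw [iteratedFDeriv_const_smul_apply' hcomp.contDiffAt,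
      iteratedFDeriv_comp_const_smul _ (hf.contDiff_nat i)]
  rw [hderiv, norm_smul, norm_smul, mul_assoc, Real.norm_of_nonneg (by positivity),
    Real.norm_of_nonneg (by positivity)]
  gcongr
  · exact (one_le_inv₀ hl₀).2 hl.2
  · exact Nat.le_of_lt_succ i.2
  · exact hf.norm_iteratedFDeriv_le_Cnorm (Nat.le_of_lt_succ i.2) _

lemma support_scaled_subset_image (hl : l ≠ 0) (f : Ed d → ℝ) (x : Ed d) :
    Function.support (scaled f x l) ⊆ (fun u => x + l • u) '' Function.support f := fun z hz =>
  ⟨l⁻¹ • (z - x), right_ne_zero_of_mul hz, by simp only [smul_inv_smul₀ hl, add_sub_cancel]⟩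

lemma IsDistribution.comp_scaledLM {T : (Ed d → ℝ) →ₗ[ℝ] ℝ} (hT : IsDistribution T) (x : Ed d)
    (hl : l ∈ Ioc (0 : ℝ) 1) : IsDistribution (T ∘ₗ scaledLM x l) := by
  intro K hK
  have hl₀ := hl.1
  have hK' : IsCompact ((fun u => x + l • u) '' K) := hK.image (by fun_prop)
  obtain ⟨m, C, hC⟩ := hT _ hK'
  refine ⟨m, |C| * ((l ^ d)⁻¹ * l⁻¹ ^ m), fun f hf hfK => ?_⟩
  have hsupp : tsupport (scaled f x l) ⊆ (fun u => x + l • u) '' K :=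
    closure_minimal ((support_scaled_subset_image hl₀.ne' f x).trans
      (image_mono ((subset_tsupport f).trans hfK))) hK'.isClosed
  calc |T (scaled f x l)| ≤ C * Cnorm m (scaled f x l) := hC _ (hf.scaled x hl₀.ne') hsupp
    _ ≤ |C| * ((l ^ d)⁻¹ * l⁻¹ ^ m * Cnorm m f) :=
      mul_le_mul (le_abs_self C) (Cnorm_scaled_le hf x hl m) (Cnorm_nonneg m _) (abs_nonneg C)
    _ = |C| * ((l ^ d)⁻¹ * l⁻¹ ^ m) * Cnorm m f := (mul_assoc _ _ _).symm

end Scaling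

section Moments

variable {d n : ℕ} {f : Ed d → ℝ}

/-- The moment of `f` against the homogeneous polynomial `u ↦ A(u, …, u)` of degree `n`. -/
def moment (f : Ed d → ℝ) (A : Ed d [×n]→L[ℝ] ℝ) : ℝ := ∫ u, f u * A fun _ => u

lemma continuous_apply_diag (A : Ed d [×n]→L[ℝ] ℝ) : Continuous fun u => A fun _ => u :=
  A.cont.comp (continuous_pi fun _ => continuous_id)

lemma moment_constOfIsEmpty (f : Ed d → ℝ) :
    moment f (.constOfIsEmpty ℝ (fun _ : Fin 0 => Ed d) 1) = ∫ u, f u := by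
  simp only [moment, ContinuousMultilinearMap.constOfIsEmpty_apply, mul_one]

lemma moment_scaled_zero (f : Ed d → ℝ) (A : Ed d [×n]→L[ℝ] ℝ) {l : ℝ} (hl : 0 < l) :
    moment (scaled f 0 l) A = l ^ n * moment f A := by
  rw [moment, integral_scaled_zero_mul f (fun u => A fun _ => u) hl, moment, ← integral_const_mul]
  refine integral_congr_ae (.of_forall fun u => ?_)
  simp only [A.map_smul_univ (fun _ => l) fun _ => u, Finset.prod_const, Finset.card_univ,
    Fintype.card_fin, smul_eq_mul, mul_left_comm]

lemma moment_sub {g : Ed d → ℝ} (hf : IsTestFunction f) (hg : IsTestFunction g)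
    (A : Ed d [×n]→L[ℝ] ℝ) : moment (f - g) A = moment f A - moment g A := by
  simp only [moment, Pi.sub_apply, sub_mul]
  exact integral_sub (hf.integrable_mul (continuous_apply_diag A))
    (hg.integrable_mul (continuous_apply_diag A))

lemma moment_sum_smul {ι : Type*} [Fintype ι] {g : ι → Ed d → ℝ} (hg : ∀ i, IsTestFunction (g i))
    (c : ι → ℝ) (A : Ed d [×n]→L[ℝ] ℝ) :
    moment (∑ i, c i • g i) A = ∑ i, c i * moment (g i) A := by
  simp only [moment, Finset.sum_apply, Pi.smul_apply, smul_eq_mul, Finset.sum_mul, mul_assoc]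
  rw [integral_finsetSum _ fun i _ =>
    ((hg i).integrable_mul (continuous_apply_diag A)).const_mul (c i)]
  simp only [integral_const_mul]

lemma norm_scaled_convolution_le_of_moment_eq_zero {k ψ : Ed d → ℝ} {r : ℕ} {B δ : ℝ}
    (hk : IsTestFunction k) (hksupp : Function.support k ⊆ closedBall 0 1)
    (hmom : ∀ n < r, ∀ A : Ed d [×n]→L[ℝ] ℝ, moment k A = 0) (hψ : ContDiff ℝ r ψ)
    (hB : ∀ x, ‖iteratedFDeriv ℝ r ψ x‖ ≤ B) (hδ : 0 < δ) (y : Ed d) :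
    ‖(scaled k 0 δ ⋆ ψ) y‖ ≤ (∫ u, ‖k u‖) * (B * δ ^ r) := by
  let A (j : ℕ) : Ed d [×j]→L[ℝ] ℝ := (iteratedFDeriv ℝ j ψ y).compContinuousLinearMap
    fun _ => -δ • ContinuousLinearMap.id ℝ (Ed d)
  let P (u : Ed d) : ℝ := ∑ j ∈ Finset.range r, (j.factorial : ℝ)⁻¹ • A j fun _ => u
  have hP : Continuous P :=
    continuous_finsetSum _ fun j _ => continuous_const.mul (continuous_apply_diag (A j))
  have hkP : ∫ u, k u * P u = 0 := by
    simp only [P, Finset.mul_sum, smul_eq_mul, mul_left_comm (k _)]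
    rw [integral_finsetSum _ fun j _ =>
      (hk.integrable_mul (continuous_apply_diag (A j))).const_mul _]
    refine Finset.sum_eq_zero fun j hj => ?_
    rw [integral_const_mul, ← moment, hmom j (Finset.mem_range.1 hj), mul_zero]
  have hconv : (scaled k 0 δ ⋆ ψ) y = ∫ u, k u * (ψ (y + -δ • u) - P u) := by
    have hψy : Continuous fun u => ψ (y + -δ • u) := hψ.continuous.comp (by fun_prop)
    simp only [mul_sub]
    rw [integral_sub (hk.integrable_mul hψy) (hk.integrable_mul hP), hkP, sub_zero,
      convolution_lsmul]
    simpa only [neg_smul, ← sub_eq_add_neg, smul_eq_mul] using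
      integral_scaled_zero_mul k (fun t => ψ (y - t)) hδ
  rw [hconv, ← integral_mul_const]
  refine norm_integral_le_of_norm_le (hk.integrable.norm.mul_const _) (.of_forall fun u => ?_)
  rw [norm_mul]
  by_cases hu : k u = 0
  · simp only [hu, norm_zero, zero_mul, le_refl]
  have hδu : ‖-δ • u‖ ≤ δ := by
    rw [norm_smul, norm_neg, Real.norm_of_nonneg hδ.le]
    exact mul_le_of_le_one_right hδ.le (mem_closedBall_zero_iff.1 (hksupp hu))
  have hB₀ : 0 ≤ B := (norm_nonneg _).trans (hB 0)
  gcongr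
  exact (norm_sub_sum_iteratedFDeriv_le hψ hB y (-δ • u)).trans (by gcongr)

end Moments

section Mollifier

variable {d r : ℕ} {k ψ : Ed d → ℝ} {δ : ℝ} {T : (Ed d → ℝ) →ₗ[ℝ] ℝ}

lemma IsDistribution.tendsto_scaled_convolution (hT : IsDistribution T) {ρ : Ed d → ℝ}
    (hρ : IsTestFunction ρ) (hρ₁ : ∫ u, ρ u = 1) (hψ : IsTestFunction ψ) :
    Tendsto (fun l => T (scaled ρ 0 l ⋆ ψ)) (nhdsWithin 0 (Ioi 0)) (nhds (T ψ)) := by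
  let G (y : Ed d) : ℝ := T fun z => ψ (z - y)
  have hG : Continuous G := hT.continuous_apply_translate hψ
  have hsub (g : Ed d → ℝ) : ∫ u in tsupport ρ, ρ u * g u = ∫ u, ρ u * g u :=
    setIntegral_eq_integral_of_forall_compl_eq_zero fun u hu => by
      rw [image_eq_zero_of_notMem_tsupport hu, zero_mul]
  have hcont : Continuous fun l : ℝ => ∫ u in tsupport ρ, ρ u * G (l • u) := by
    refine continuous_parametric_integral_of_continuous ?_ hρ.2.isCompact
    have := hρ.continuous
    simp only [Function.uncurry_def]
    fun_prop
  have hzero : ∫ u in tsupport ρ, ρ u * G ((0 : ℝ) • u) = T ψ := by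
    simp only [hsub, zero_smul, integral_mul_const, hρ₁, one_mul, G, sub_zero]
  rw [← hzero]
  refine ((hcont.tendsto 0).mono_left nhdsWithin_le_nhds).congr' ?_
  filter_upwards [self_mem_nhdsWithin] with l hl
  have hρl := hρ.scaled 0 (ne_of_gt hl)
  rw [hsub, hT.map_convolution hψ hρl.continuous hρl.2, integral_scaled_zero_mul ρ G hl]

/-- A tweaked kernel: a test function supported in the ball of radius `1/2` whose moments up to
order `r` are those of the Dirac mass at the origin. -/
structure IsTweaked (r : ℕ) (k : Ed d → ℝ) : Prop where
  isTestFunction : IsTestFunction k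
  support_subset : Function.support k ⊆ closedBall 0 (1 / 2)
  moment_eq : ∀ n ≤ r, ∀ A : Ed d [×n]→L[ℝ] ℝ, moment k A = A 0

/-- The mollifier `k² ⋆ k` built from a kernel `k`, where `k²` is `k` scaled by `2`. -/
def mollifier (k : Ed d → ℝ) : Ed d → ℝ := scaled k 0 2 ⋆ k

/-- The left factor in the decomposition `scaled_mollifier_half_sub` of the dyadic increments of
the mollifier. -/
def dyadicDiff (k : Ed d → ℝ) : Ed d → ℝ := scaled k 0 (1 / 2) - scaled k 0 2

lemma IsTestFunction.mollifier (hk : IsTestFunction k) : IsTestFunction (mollifier k) :=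
  hk.convolution (hk.scaled 0 two_ne_zero).continuous (hk.scaled 0 two_ne_zero).2

lemma IsTestFunction.dyadicDiff (hk : IsTestFunction k) : IsTestFunction (dyadicDiff k) :=
  (testFunctions d).sub_mem (hk.scaled 0 (by norm_num)) (hk.scaled 0 two_ne_zero)

lemma scaled_mollifier (k : Ed d → ℝ) (hδ : 0 < δ) :
    scaled (mollifier k) 0 δ = scaled k 0 (2 * δ) ⋆ scaled k 0 δ := by
  rw [mollifier, scaled_zero_convolution _ _ hδ, scaled_zero_scaled k 0 2 hδ.ne']

lemma scaled_dyadicDiff (k : Ed d → ℝ) (hδ : δ ≠ 0) :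
    scaled (dyadicDiff k) 0 δ = scaled k 0 (δ / 2) - scaled k 0 (2 * δ) := by
  rw [← scaledLM_apply, dyadicDiff, map_sub, scaledLM_apply, scaledLM_apply,
    scaled_zero_scaled k 0 _ hδ, scaled_zero_scaled k 0 _ hδ, one_div_mul_eq_div]

lemma scaled_mollifier_half_sub (hk : IsTestFunction k) (hδ : 0 < δ) :
    scaled (mollifier k) 0 (δ / 2) - scaled (mollifier k) 0 δ =
      scaled (dyadicDiff k) 0 δ ⋆ scaled k 0 δ := by
  rw [scaled_mollifier k (half_pos hδ), scaled_mollifier k hδ, mul_div_cancel₀ δ two_ne_zero,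
    convolution_lsmul_comm (scaled k 0 δ), scaled_dyadicDiff k hδ.ne',
    (hk.scaled 0 (half_pos hδ).ne').sub_convolution (hk.scaled 0 (by positivity))
      (hk.scaled 0 hδ.ne')]

namespace IsTweaked

lemma integral_eq_one (hk : IsTweaked r k) : ∫ u, k u = 1 := by
  rw [← moment_constOfIsEmpty, hk.moment_eq 0 r.zero_le,
    ContinuousMultilinearMap.constOfIsEmpty_apply]

lemma integral_mollifier (hk : IsTweaked r k) : ∫ u, mollifier k u = 1 := by
  have hconv := integral_convolution (μ := volume) (ν := volume) (.lsmul ℝ ℝ)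
    (hk.isTestFunction.scaled 0 two_ne_zero).integrable hk.isTestFunction.integrable
  rw [mollifier, hconv, integral_scaled_zero k two_pos, hk.integral_eq_one,
    ContinuousLinearMap.lsmul_apply, smul_eq_mul, one_mul]

lemma moment_scaled_zero (hk : IsTweaked r k) {n : ℕ} (hn : n ≤ r) (A : Ed d [×n]→L[ℝ] ℝ)
    {l : ℝ} (hl : 0 < l) : moment (scaled k 0 l) A = A 0 := by
  rw [_root_.moment_scaled_zero k A hl, hk.moment_eq n hn]
  have hA := A.map_smul_univ (fun _ => l) 0
  simp only [Pi.zero_apply, smul_zero, Finset.prod_const, Finset.card_univ, Fintype.card_fin,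
    smul_eq_mul] at hA
  exact hA.symm

lemma moment_dyadicDiff (hk : IsTweaked r k) {n : ℕ} (hn : n ≤ r) (A : Ed d [×n]→L[ℝ] ℝ) :
    moment (dyadicDiff k) A = 0 := by
  rw [dyadicDiff, moment_sub (hk.isTestFunction.scaled 0 (by norm_num))
    (hk.isTestFunction.scaled 0 two_ne_zero), hk.moment_scaled_zero hn A (by norm_num),
    hk.moment_scaled_zero hn A two_pos, sub_self]

lemma support_scaled_subset (hk : IsTweaked r k) {l : ℝ} (hl : l ∈ Ioc (0 : ℝ) 2) :
    Function.support (scaled k 0 l) ⊆ closedBall 0 1 :=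
  (support_scaled_zero_subset hl.1 hk.support_subset).trans
    (closedBall_subset_closedBall (by linarith [hl.2]))

lemma support_dyadicDiff_subset (hk : IsTweaked r k) :
    Function.support (dyadicDiff k) ⊆ closedBall 0 1 :=
  (Function.support_sub _ _).trans <| union_subset (hk.support_scaled_subset (by norm_num))
    (hk.support_scaled_subset (by norm_num))

variable {N : ℝ}

lemma abs_apply_mollifier_convolution_le (hk : IsTweaked r k) (hT : IsDistribution T)
    (hN : ∀ y ∈ closedBall (0 : Ed d) 2, |T (scaled k y 1)| ≤ N) (hψ : Br r ψ) :
    |T (mollifier k ⋆ ψ)| ≤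
      (∫ u, ‖scaled k 0 2 u‖) * N * volume.real (closedBall (0 : Ed d) 2) := by
  have hk₂ : IsTestFunction (scaled k 0 2) := hk.isTestFunction.scaled 0 two_ne_zero
  have hsupp : Function.support (scaled k 0 2 ⋆ ψ) ⊆ closedBall 0 2 := one_add_one_eq_two (R := ℝ) ▸
    support_convolution_subset_closedBall (hk.support_scaled_subset (by norm_num))
      hψ.support_subset
  rw [mollifier, hk₂.convolution_right_comm hk.isTestFunction hψ.1]
  refine hT.abs_map_convolution_le hk.isTestFunction
    (hψ.1.convolution hk₂.continuous hk₂.2).continuous hsupp (fun y => ?_) fun y hy => ?_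
  · simpa only [mul_one] using norm_convolution_lsmul_le hk₂.integrable hψ.norm_le_one y
  · simpa only [← translate_scaled_zero k y 1, scaled_zero_one] using hN y hy

lemma abs_apply_mollifier_increment_le (hk : IsTweaked r k) (hT : IsDistribution T)
    (hδ : δ ∈ Ioc (0 : ℝ) 1) (hN : ∀ y ∈ closedBall (0 : Ed d) 2, |T (scaled k y δ)| ≤ N)
    (hψ : Br r ψ) :
    |T (scaled (mollifier k) 0 (δ / 2) ⋆ ψ) - T (scaled (mollifier k) 0 δ ⋆ ψ)| ≤
      (∫ u, ‖dyadicDiff k u‖) * δ ^ r * N * volume.real (closedBall (0 : Ed d) 2) := by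
  have hδ₀ := hδ.1
  have hkδ := hk.isTestFunction.scaled 0 hδ₀.ne'
  have hdiff := hk.isTestFunction.dyadicDiff.scaled 0 hδ₀.ne'
  have hρ := hk.isTestFunction.mollifier
  rw [← map_sub, ← (hρ.scaled 0 (half_pos hδ₀).ne').sub_convolution (hρ.scaled 0 hδ₀.ne') hψ.1,
    scaled_mollifier_half_sub hk.isTestFunction hδ₀, hdiff.convolution_right_comm hkδ hψ.1]
  have hsupp : Function.support (scaled (dyadicDiff k) 0 δ ⋆ ψ) ⊆ closedBall 0 2 :=
    (support_convolution_subset_closedBall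
      (support_scaled_zero_subset hδ₀ hk.support_dyadicDiff_subset) hψ.support_subset).trans
      (closedBall_subset_closedBall (by linarith [hδ.2]))
  refine hT.abs_map_convolution_le hkδ (hψ.1.convolution hdiff.continuous hdiff.2).continuous
    hsupp (fun y => ?_) fun y hy => ?_
  · simpa only [one_mul] using norm_scaled_convolution_le_of_moment_eq_zero
      hk.isTestFunction.dyadicDiff hk.support_dyadicDiff_subset
      (fun n hn => hk.moment_dyadicDiff hn.le) (hψ.1.contDiff_nat r)
      (hψ.norm_iteratedFDeriv_le_one le_rfl) hδ₀ y
  · rw [translate_scaled_zero]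
    exact hN y hy

lemma exists_abs_apply_le (hk : IsTweaked r k) {s : ℝ} (hs : s < r) :
    ∃ C, ∀ T : (Ed d → ℝ) →ₗ[ℝ] ℝ, IsDistribution T → ∀ M,
      (∀ δ ∈ Ioc (0 : ℝ) 1, ∀ y ∈ closedBall (0 : Ed d) 2, |T (scaled k y δ)| ≤ M * δ ^ (-s)) →
      ∀ ψ, Br r ψ → |T ψ| ≤ C * M := by
  let V := volume.real (closedBall (0 : Ed d) 2)
  let I₀ := ∫ u, ‖scaled k 0 2 u‖
  let I₁ := ∫ u, ‖dyadicDiff k u‖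
  let q : ℝ := (1 / 2) ^ (r - s)
  have hq : q < 1 := Real.rpow_lt_one (by norm_num) (by norm_num) (sub_pos.2 hs)
  refine ⟨I₀ * V + I₁ * V / (1 - q), fun T hT M hM ψ hψ => ?_⟩
  let a (n : ℕ) : ℝ := T (scaled (mollifier k) 0 ((1 / 2) ^ n) ⋆ ψ)
  have ha₀ : |a 0| ≤ I₀ * M * V := by
    simp only [a, pow_zero, scaled_zero_one]
    refine hk.abs_apply_mollifier_convolution_le hT (fun y hy => ?_) hψ
    simpa only [Real.one_rpow, mul_one] using hM 1 (by norm_num) y hy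
  have hincr (n : ℕ) : dist (a n) (a (n + 1)) ≤ I₁ * V * M * q ^ n := by
    have hδ : (1 / 2 : ℝ) ^ n ∈ Ioc (0 : ℝ) 1 :=
      ⟨by positivity, pow_le_one₀ (by norm_num) (by norm_num)⟩
    have hqn : q ^ n = ((1 / 2 : ℝ) ^ n) ^ r * ((1 / 2) ^ n) ^ (-s) := by
      rw [Real.rpow_pow_comm (by norm_num), sub_eq_add_neg, Real.rpow_add hδ.1, Real.rpow_natCast]
    rw [dist_comm, Real.dist_eq, hqn]
    simp only [a, pow_succ, mul_one_div]
    exact (hk.abs_apply_mollifier_increment_le hT hδ (hM _ hδ) hψ).trans_eq (by ring)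
  have hlim : Tendsto a atTop (nhds (T ψ)) :=
    (hT.tendsto_scaled_convolution hk.isTestFunction.mollifier hk.integral_mollifier hψ.1).comp
      (tendsto_pow_atTop_nhdsWithin_zero_of_lt_one (by norm_num) (by norm_num))
  have hdist := dist_le_of_le_geometric_of_tendsto₀ q _ hq hincr hlim
  calc |T ψ| ≤ |a 0| + dist (a 0) (T ψ) := by
        rw [Real.dist_eq]; linarith [abs_sub_abs_le_abs_sub (T ψ) (a 0), abs_sub_comm (T ψ) (a 0)]
    _ ≤ I₀ * M * V + I₁ * V * M / (1 - q) := add_le_add ha₀ hdist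
    _ = (I₀ * V + I₁ * V / (1 - q)) * M := by ring

end IsTweaked

end Mollifier

section Tweaking

variable {d : ℕ} {φ : Ed d → ℝ}

lemma sum_eval_basis_mul_pow {ι K : Type*} [Field K] [DecidableEq ι] {s : Finset ι} {v : ι → K}
    (hv : Set.InjOn v s) {n : ℕ} (hn : n < s.card) (x : K) :
    ∑ i ∈ s, (Lagrange.basis s v i).eval x * v i ^ n = x ^ n := by
  have hX : (Polynomial.X ^ n : Polynomial K).degree < s.card := by
    rw [Polynomial.degree_X_pow]; exact_mod_cast hn
  have heval := congrArg (Polynomial.eval x) (Lagrange.eq_interpolate hv hX)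
  simp only [Lagrange.interpolate_apply, Polynomial.eval_finsetSum, Polynomial.eval_mul,
    Polynomial.eval_C, Polynomial.eval_pow, Polynomial.eval_X] at heval
  simp only [heval, mul_comm]

lemma exists_injective_forall_mem_Ioc {X : Type*} [LinearOrder X] [DenselyOrdered X] {a b : X}
    (hab : a < b) (n : ℕ) : ∃ v : Fin n → X, Function.Injective v ∧ ∀ i, v i ∈ Ioc a b := by
  obtain ⟨s, hs, rfl⟩ := (Ioc_infinite hab).exists_subset_card_eq n
  exact ⟨fun i => s.orderEmbOfFin rfl i, (s.orderEmbOfFin rfl).injective,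
    fun i => hs (s.orderEmbOfFin_mem rfl i)⟩

lemma moment_sum_inv_integral_smul_scaled (hφ : IsTestFunction φ) (hφi : ∫ x, φ x ≠ 0)
    {ι : Type*} [Fintype ι] {c v : ι → ℝ} (hv : ∀ i, 0 < v i) {n : ℕ}
    (hc : ∑ i, c i * v i ^ n = 0 ^ n) (A : Ed d [×n]→L[ℝ] ℝ) :
    moment (∑ i, ((∫ x, φ x)⁻¹ * c i) • scaled φ 0 (v i)) A = A 0 := by
  have hfactor : moment (∑ i, ((∫ x, φ x)⁻¹ * c i) • scaled φ 0 (v i)) A =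
      (∫ x, φ x)⁻¹ * (∑ i, c i * v i ^ n) * moment φ A := by
    rw [moment_sum_smul fun i => hφ.scaled 0 (hv i).ne']
    simp only [moment_scaled_zero φ A (hv _), Finset.mul_sum, Finset.sum_mul, mul_assoc]
  rw [hfactor, hc]
  cases n with
  | zero =>
    have hA (u : Ed d) : A (fun _ => u) = A 0 := congrArg A (Subsingleton.elim _ _)
    simp only [moment, hA, integral_mul_const, pow_zero, mul_one, inv_mul_cancel_left₀ hφi]
  | succ n => rw [zero_pow n.succ_ne_zero, mul_zero, zero_mul, A.map_zero]

lemma exists_isTweaked_sum_scaled (hφ : IsTestFunction φ) (hφi : ∫ x, φ x ≠ 0)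
    (r : ℕ) : ∃ c v : Fin (r + 1) → ℝ, (∀ i, v i ∈ Ioc (0 : ℝ) 1) ∧
      IsTweaked r (∑ i, c i • scaled φ 0 (v i)) := by
  obtain ⟨R, hR₁, hR⟩ := hφ.2.isCompact.isBounded.subset_closedBall_lt 1 (0 : Ed d)
  have hR₀ : 0 < R := one_pos.trans hR₁
  obtain ⟨v, hinj, hv⟩ := exists_injective_forall_mem_Ioc
    (show 0 < 1 / 2 / R by positivity) (r + 1)
  have hvφ (i) : IsTestFunction (scaled φ 0 (v i)) := hφ.scaled 0 (hv i).1.ne'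
  have hvsupp (i) : Function.support (scaled φ 0 (v i)) ⊆ closedBall 0 (1 / 2) :=
    (support_scaled_zero_subset (hv i).1 ((subset_tsupport φ).trans hR)).trans
      (closedBall_subset_closedBall ((le_div_iff₀ hR₀).1 (hv i).2))
  refine ⟨fun i => (∫ x, φ x)⁻¹ * (Lagrange.basis Finset.univ v i).eval 0, v,
    fun i => ⟨(hv i).1, (hv i).2.trans ?_⟩, ?_, ?_, fun n hn A => ?_⟩
  · rw [div_le_one hR₀]; linarith
  · exact (testFunctions d).sum_mem fun i _ => (testFunctions d).smul_mem _ (hvφ i)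
  · refine Function.support_subset_iff'.2 fun u hu => ?_
    rw [Finset.sum_apply]
    refine Finset.sum_eq_zero fun i _ => ?_
    rw [Pi.smul_apply, Function.notMem_support.1 fun hui => hu (hvsupp i hui), smul_zero]
  · exact moment_sum_inv_integral_smul_scaled hφ hφi (fun i => (hv i).1)
      (sum_eval_basis_mul_pow hinj.injOn (by simpa using Nat.lt_succ_of_le hn) 0) A

lemma scaled_scaled_sum_smul_scaled_zero {ι : Type*} [Fintype ι] (c v : ι → ℝ) (φ : Ed d → ℝ)
    (x y : Ed d) {δ ε : ℝ} (hδ : δ ≠ 0) (hε : ε ≠ 0) :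
    scaled (scaled (∑ i, c i • scaled φ 0 (v i)) y δ) x ε =
      ∑ i, c i • scaled φ (x + ε • y) (v i * δ * ε) := by
  simp only [← scaledLM_apply y, ← scaledLM_apply x, map_sum, map_smul]
  simp only [scaledLM_apply, scaled_zero_scaled φ y _ hδ, scaled_scaled φ x y _ hε]

end Tweaking

section Coherence

variable {d : ℕ} {α β γ s : ℝ}

lemma abs_le_of_coherence_of_homogeneity {a b C₁ C₂ D τ ε : ℝ} (hαγ : α ≤ γ) (hβγ : β ≤ γ)
    (hα : -s ≤ α) (hβ : -s ≤ β) (hτ : τ ∈ Ioc (0 : ℝ) 1) (hε : ε ∈ Ioc (0 : ℝ) 1)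
    (hD : D ∈ Icc 0 (2 * ε)) (hb : |b| ≤ C₁ * (τ * ε) ^ β)
    (hab : |a - b| ≤ C₂ * (τ * ε) ^ α * (D + τ * ε) ^ (γ - α)) :
    |a| ≤ (|C₁| + |C₂| * 3 ^ (γ - α)) * τ ^ (-s) * ε ^ β := by
  have hε₀ := hε.1
  have hτ₀ := hτ.1
  have hD₀ := hD.1
  have hpow {p : ℝ} (hp : -s ≤ p) : (τ * ε) ^ p ≤ τ ^ (-s) * ε ^ p := by
    rw [Real.mul_rpow hτ₀.le hε₀.le]
    gcongr ?_ * _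
    exact Real.rpow_le_rpow_of_exponent_ge hτ₀ hτ.2 hp
  have hdist : (D + τ * ε) ^ (γ - α) ≤ 3 ^ (γ - α) * ε ^ (γ - α) := by
    rw [← Real.mul_rpow (by norm_num) hε₀.le]
    refine Real.rpow_le_rpow (by positivity) ?_ (sub_nonneg.2 hαγ)
    linarith [hD.2, mul_le_of_le_one_left hε₀.le hτ.2]
  have hεpow : ε ^ α * ε ^ (γ - α) ≤ ε ^ β := by
    rw [← Real.rpow_add hε₀, add_sub_cancel]
    exact Real.rpow_le_rpow_of_exponent_ge hε₀ hε.2 hβγ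
  calc |a| ≤ |b| + |a - b| := by linarith [abs_sub_abs_le_abs_sub a b]
    _ ≤ |C₁| * (τ * ε) ^ β + |C₂| * (τ * ε) ^ α * (D + τ * ε) ^ (γ - α) := by
        refine (add_le_add hb hab).trans ?_
        gcongr <;> exact le_abs_self _
    _ ≤ |C₁| * (τ ^ (-s) * ε ^ β) +
          |C₂| * (τ ^ (-s) * ε ^ α) * (3 ^ (γ - α) * ε ^ (γ - α)) := by
        gcongr
        exacts [hpow hβ, hpow hα]
    _ = |C₁| * τ ^ (-s) * ε ^ β +
          |C₂| * 3 ^ (γ - α) * τ ^ (-s) * (ε ^ α * ε ^ (γ - α)) := by ring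
    _ ≤ |C₁| * τ ^ (-s) * ε ^ β + |C₂| * 3 ^ (γ - α) * τ ^ (-s) * ε ^ β := by gcongr
    _ = (|C₁| + |C₂| * 3 ^ (γ - α)) * τ ^ (-s) * ε ^ β := by ring

variable {F : Ed d → (Ed d → ℝ) →ₗ[ℝ] ℝ} {φ : Ed d → ℝ} {K : Set (Ed d)}

lemma exists_abs_apply_scaled_add_le (hαγ : α ≤ γ) (hβγ : β ≤ γ) (hα : -s ≤ α) (hβ : -s ≤ β)
    (hcoh : ∃ C, ∀ y ∈ cthickening 2 K, ∀ z ∈ cthickening 2 K, ∀ ε ∈ Ioc (0 : ℝ) 1,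
      |F z (scaled φ y ε) - F y (scaled φ y ε)| ≤ C * ε ^ α * (‖z - y‖ + ε) ^ (γ - α))
    (hhom : ∃ C, ∀ x ∈ cthickening 2 K, ∀ ε ∈ Ioc (0 : ℝ) 1,
      |F x (scaled φ x ε)| ≤ C * ε ^ β) :
    ∃ C, ∀ x ∈ K, ∀ ε ∈ Ioc (0 : ℝ) 1, ∀ y ∈ closedBall (0 : Ed d) 2, ∀ τ ∈ Ioc (0 : ℝ) 1,
      |F x (scaled φ (x + ε • y) (τ * ε))| ≤ C * τ ^ (-s) * ε ^ β := by
  obtain ⟨C₁, hC₁⟩ := hhom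
  obtain ⟨C₂, hC₂⟩ := hcoh
  refine ⟨|C₁| + |C₂| * 3 ^ (γ - α), fun x hx ε hε y hy τ hτ => ?_⟩
  have hy' : ‖ε • y‖ ≤ 2 * ε := by
    rw [norm_smul, Real.norm_of_nonneg hε.1.le, mul_comm]
    exact mul_le_mul_of_nonneg_right (mem_closedBall_zero_iff.1 hy) hε.1.le
  have hxy : ‖x - (x + ε • y)‖ ≤ 2 * ε := by rwa [sub_add_cancel_left, norm_neg]
  have hmem : x + ε • y ∈ cthickening 2 K := by
    refine mem_cthickening_of_dist_le _ x 2 K hx ?_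
    rw [dist_self_add_left]
    linarith [hε.2]
  have hτε : τ * ε ∈ Ioc (0 : ℝ) 1 := ⟨mul_pos hτ.1 hε.1, mul_le_one₀ hτ.2 hε.1.le hε.2⟩
  exact abs_le_of_coherence_of_homogeneity hαγ hβγ hα hβ hτ hε ⟨norm_nonneg _, hxy⟩
    (hC₁ _ hmem _ hτε) (hC₂ _ hmem _ (self_subset_cthickening K hx) _ hτε)

lemma abs_apply_scaled_scaled_sum_le {ι : Type*} [Fintype ι] {c v : ι → ℝ}
    (hv : ∀ i, v i ∈ Ioc (0 : ℝ) 1) {T : (Ed d → ℝ) →ₗ[ℝ] ℝ} {x y : Ed d} {N δ ε : ℝ}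
    (hδ : δ ∈ Ioc (0 : ℝ) 1) (hε : ε ≠ 0)
    (hT : ∀ τ ∈ Ioc (0 : ℝ) 1, |T (scaled φ (x + ε • y) (τ * ε))| ≤ N * τ ^ (-s)) :
    |T (scaled (scaled (∑ i, c i • scaled φ 0 (v i)) y δ) x ε)| ≤
      (∑ i, |c i| * v i ^ (-s)) * N * δ ^ (-s) := by
  rw [scaled_scaled_sum_smul_scaled_zero c v φ x y hδ.1.ne' hε, map_sum]
  refine (Finset.abs_sum_le_sum_abs _ _).trans ?_
  simp only [Finset.sum_mul]
  refine Finset.sum_le_sum fun i _ => ?_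
  have hvδ : v i * δ ∈ Ioc (0 : ℝ) 1 := ⟨mul_pos (hv i).1 hδ.1, mul_le_one₀ (hv i).2 hδ.1.le hδ.2⟩
  calc |T (c i • scaled φ (x + ε • y) (v i * δ * ε))|
      = |c i| * |T (scaled φ (x + ε • y) (v i * δ * ε))| := by
        rw [map_smul, smul_eq_mul, abs_mul]
    _ ≤ |c i| * (N * (v i * δ) ^ (-s)) := by gcongr; exact hT _ hvδ
    _ = |c i| * v i ^ (-s) * N * δ ^ (-s) := by
        rw [Real.mul_rpow (hv i).1.le hδ.1.le]; ring

theorem stmt15_general (hF : ∀ x, IsDistribution (F x)) (hφ : IsTestFunction φ)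
    (hφi : ∫ x, φ x ≠ 0) (hαγ : α ≤ γ) (hβγ : β ≤ γ)
    (hcoh : ∃ C, ∀ y ∈ cthickening 2 K, ∀ z ∈ cthickening 2 K, ∀ ε ∈ Ioc (0 : ℝ) 1,
      |F z (scaled φ y ε) - F y (scaled φ y ε)| ≤ C * ε ^ α * (‖z - y‖ + ε) ^ (γ - α))
    (hhom : ∃ C, ∀ x ∈ cthickening 2 K, ∀ ε ∈ Ioc (0 : ℝ) 1,
      |F x (scaled φ x ε)| ≤ C * ε ^ β)
    {r : ℕ} (hr : max (-α) (-β) < r) :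
    ∃ C, ∀ x ∈ K, ∀ ε ∈ Ioc (0 : ℝ) 1, ∀ ψ, Br r ψ → |F x (scaled ψ x ε)| ≤ C * ε ^ β := by
  obtain ⟨c, v, hv, hk⟩ := exists_isTweaked_sum_scaled hφ hφi r
  obtain ⟨C, hC⟩ := hk.exists_abs_apply_le hr
  obtain ⟨B, hB⟩ := exists_abs_apply_scaled_add_le hαγ hβγ (neg_le.1 (le_max_left _ _))
    (neg_le.1 (le_max_right _ _)) hcoh hhom
  let S := ∑ i, |c i| * v i ^ (-max (-α) (-β))
  refine ⟨C * (S * B), fun x hx ε hε ψ hψ => ?_⟩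
  have hkernel : ∀ δ ∈ Ioc (0 : ℝ) 1, ∀ y ∈ closedBall (0 : Ed d) 2,
      |(F x ∘ₗ scaledLM x ε) (scaled (∑ i, c i • scaled φ 0 (v i)) y δ)| ≤
        S * (B * ε ^ β) * δ ^ (-max (-α) (-β)) := fun δ hδ y hy =>
    abs_apply_scaled_scaled_sum_le hv hδ hε.1.ne' fun τ hτ =>
      (hB x hx ε hε y hy τ hτ).trans_eq (mul_right_comm _ _ _)
  exact (hC _ ((hF x).comp_scaledLM x hε) _ hkernel ψ hψ).trans_eq (by ring)

end Coherence

/-- Enhanced local homogeneity: the homogeneity bound holds uniformly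
over all normalized test functions, with exponent `β' = β_{K̄₂}`. -/
theorem stmt15 {d : ℕ} (γ : ℝ) (F : Ed d → ((Ed d → ℝ) →ₗ[ℝ] ℝ)) (hF : IsGerm F)
    (φ : Ed d → ℝ) (hφ : IsTestFunction φ) (hφi : (∫ x, φ x) ≠ 0)
    (αf βf : Set (Ed d) → ℝ) (hcoh : GammaCoherentFam γ F φ αf)
    (hhom : ∀ K : Set (Ed d), IsCompact K → βf K < γ ∧ ∃ C : ℝ,
      ∀ x ∈ K, ∀ ε ∈ Set.Ioc (0:ℝ) 1, |F x (scaled φ x ε)| ≤ C * ε ^ (βf K)) :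
    ∀ K : Set (Ed d), IsCompact K → ∀ r : ℕ,
      (r : ℝ) > max (-(αf (cthickening 2 K))) (-(βf (cthickening 2 K))) →
      ∃ C : ℝ, ∀ x ∈ K, ∀ ε ∈ Set.Ioc (0:ℝ) 1, ∀ ψ : Ed d → ℝ, Br r ψ →
        |F x (scaled ψ x ε)| ≤ C * ε ^ (βf (cthickening 2 K)) := by
  intro K hK r hr
  obtain ⟨hα, hcohK⟩ := hcoh _ hK.cthickening
  obtain ⟨hβ, hhomK⟩ := hhom _ hK.cthickening
  exact stmt15_general hF.1 hφ hφi (hα.trans (min_le_right _ _)) hβ.le hcohK hhomK hr
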